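/- For any 1/2 < t < 1 and any real x ≥ 6, one has ∑_{n ≤ x} p_n^{-t} > 7·(x^{1−t} − 6^{1−t})/(10(1−t)(log x)^t), where the sum ranges over all positive integers n with n ≤ x. -/

import Mathlib

/-- The `n`-th prime number, 1-indexed: `nthPrime 1 = 2`, `nthPrime 2 = 3`, ... -/
noncomputable def nthPrime (n : ℕ) : ℕ := Nat.nth Nat.Prime (n - 1)

/-!
It suffices that `p_n ≤ (10 / 7) n log n` for `n ≥ 6`: then `p_n ^ (-t) ≥ (7 / 10) (n log x) ^ (-t)`
for `6 ≤ n ≤ x`, and the sum of `n ^ (-t)` over these `n` dominates the integral of `u ^ (-t)` over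
`[6, x]`. For `n ≥ 3000` the bound on `p_n` follows from Chebyshev's estimate
`ψ x ≥ 0.9212 x - O(log x)`, which comes from the factorials of `N`, `N / 2`, `N / 3`, `N / 5` and
`N / 30`. Below `3000` it is verified by a sieve that visits few thresholds: if at least `M` primes
do not exceed the bound for `p_(m + 1)`, then by monotonicity the bounds for
`p_(m + 1), ..., p_M` all hold.
-/

open ArithmeticFunction (vonMangoldt)

section Chebyshev

theorem sum_vonMangoldt_mul_div_eq_log_factorial {n N : ℕ} (hn : n ≤ N) :
    ∑ d ∈ Finset.Ioc 0 N, vonMangoldt d * ((n / d : ℕ) : ℝ) = Real.log n.factorial := by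
  have hvanish : ∀ d ∈ Finset.Ioc 0 N, d ∉ Finset.Ioc 0 n →
      vonMangoldt d * ((n / d : ℕ) : ℝ) = 0 := by
    intro d hd hdn
    rw [Finset.mem_Ioc] at hd hdn
    rw [Nat.div_eq_of_lt (by omega), Nat.cast_zero, mul_zero]
  rw [← Finset.sum_subset (Finset.Ioc_subset_Ioc_right hn) hvanish,
    ← ArithmeticFunction.sum_Ioc_mul_zeta_eq_sum, ArithmeticFunction.vonMangoldt_mul_zeta,
    ← Finset.prod_Ico_id_eq_factorial, Finset.Ico_add_one_right_eq_Icc,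
    ← Finset.Icc_add_one_left_eq_Ioc, Nat.cast_prod, Real.log_prod]
  · simp only [ArithmeticFunction.log_apply, zero_add]
  · intro d hd
    exact_mod_cast Nat.ne_zero_of_lt (Finset.mem_Icc.mp hd).1

theorem log_factorial_add_log_factorial_div_le_psi (N : ℕ) :
    Real.log N.factorial + Real.log (N / 30).factorial ≤
      Chebyshev.psi N + Real.log (N / 2).factorial + Real.log (N / 3).factorial +
        Real.log (N / 5).factorial := by
  rw [← sum_vonMangoldt_mul_div_eq_log_factorial le_rfl,
    ← sum_vonMangoldt_mul_div_eq_log_factorial (N.div_le_self 30),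
    ← sum_vonMangoldt_mul_div_eq_log_factorial (N.div_le_self 2),
    ← sum_vonMangoldt_mul_div_eq_log_factorial (N.div_le_self 3),
    ← sum_vonMangoldt_mul_div_eq_log_factorial (N.div_le_self 5), Chebyshev.psi,
    Nat.floor_natCast]
  simp only [← Finset.sum_add_distrib]
  refine Finset.sum_le_sum fun d _ ↦ ?_
  have hfloor : N / d + N / 30 / d ≤ 1 + N / 2 / d + N / 3 / d + N / 5 / d := by
    simp only [Nat.div_right_comm N _ d]
    omega
  calc vonMangoldt d * ((N / d : ℕ) : ℝ) + vonMangoldt d * ((N / 30 / d : ℕ) : ℝ)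
      = vonMangoldt d * ((N / d + N / 30 / d : ℕ) : ℝ) := by push_cast; ring
    _ ≤ vonMangoldt d * ((1 + N / 2 / d + N / 3 / d + N / 5 / d : ℕ) : ℝ) := by
      gcongr
    _ = _ := by push_cast; ring

theorem log_factorial_le_stirling {n : ℕ} (hn : n ≠ 0) :
    Real.log n.factorial ≤ n * Real.log n - n + Real.log n / 2 + 1 := by
  obtain ⟨k, rfl⟩ := Nat.exists_eq_succ_of_ne_zero hn
  have hseq : Real.log (Stirling.stirlingSeq (k + 1)) ≤ Real.log (Stirling.stirlingSeq 1) :=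
    Stirling.log_stirlingSeq'_antitone k.zero_le
  rw [Stirling.log_stirlingSeq_formula, Stirling.stirlingSeq_one,
    Real.log_mul (by norm_num) (by positivity), Real.log_div (by positivity) (by positivity),
    Real.log_exp, Real.log_div (by positivity) (by positivity), Real.log_exp,
    Real.log_sqrt (by norm_num)] at hseq
  rw [Nat.succ_eq_add_one]
  linarith

theorem log_thirty : Real.log 30 = Real.log 2 + Real.log 3 + Real.log 5 := by
  rw [← Real.log_mul (by norm_num) (by norm_num), ← Real.log_mul (by norm_num) (by norm_num)]
  norm_num

theorem log_factorial_combination_ge {n : ℕ} (hn : n ≠ 0) :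
    (14 * Real.log 2 + 9 * Real.log 3 + 5 * Real.log 5) * n - Real.log n / 2 - 3 ≤
      Real.log (30 * n).factorial + Real.log n.factorial - Real.log (15 * n).factorial -
        Real.log (10 * n).factorial - Real.log (6 * n).factorial := by
  have hn' : (n : ℝ) ≠ 0 := by exact_mod_cast hn
  have h30 := Stirling.le_log_factorial_stirling (n := 30 * n) (by omega)
  have h1 := Stirling.le_log_factorial_stirling hn
  have h15 := log_factorial_le_stirling (n := 15 * n) (by omega)
  have h10 := log_factorial_le_stirling (n := 10 * n) (by omega)
  have h6 := log_factorial_le_stirling (n := 6 * n) (by omega)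
  have hlog15 : Real.log 15 = Real.log 30 - Real.log 2 := by
    rw [← Real.log_div (by norm_num) (by norm_num)]; norm_num
  have hlog10 : Real.log 10 = Real.log 30 - Real.log 3 := by
    rw [← Real.log_div (by norm_num) (by norm_num)]; norm_num
  have hlog6 : Real.log 6 = Real.log 30 - Real.log 5 := by
    rw [← Real.log_div (by norm_num) (by norm_num)]; norm_num
  have hconst : Real.log 30 ≤ 2 * Real.log (2 * Real.pi) := by
    have hpi : (30 : ℝ) ≤ (2 * Real.pi) ^ 2 := by nlinarith [Real.pi_gt_three]
    simpa only [Real.log_pow, Nat.cast_ofNat] using Real.log_le_log (by norm_num) hpi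
  push_cast at h30 h15 h10 h6
  rw [Real.log_mul (by norm_num) hn'] at h30 h15 h10 h6
  rw [hlog15] at h15
  rw [hlog10] at h10
  rw [hlog6] at h6
  rw [log_thirty] at h30 h15 h10 h6 hconst
  linarith

theorem mul_sub_log_le_psi {x : ℝ} (hx : 1 ≤ x) :
    0.9212 * x - Real.log x / 2 - 31 ≤ Chebyshev.psi x := by
  have hlogx := Real.log_nonneg hx
  set n := ⌊x / 30⌋₊
  have hxn : x / 30 - 1 < n := Nat.sub_one_lt_floor _
  have hnx : (n : ℝ) ≤ x / 30 := Nat.floor_le (by linarith)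
  rcases eq_or_ne n 0 with hn0 | hn0
  · rw [hn0, Nat.cast_zero] at hxn
    linarith [Chebyshev.psi_nonneg x]
  have hlogn : Real.log n ≤ Real.log x :=
    Real.log_le_log (by exact_mod_cast hn0.bot_lt) (by linarith)
  have hpsi : Chebyshev.psi (30 * n : ℕ) ≤ Chebyshev.psi x :=
    Chebyshev.psi_mono (by push_cast; linarith)
  have hfact := log_factorial_add_log_factorial_div_le_psi (30 * n)
  rw [show 30 * n / 30 = n by omega, show 30 * n / 2 = 15 * n by omega,
    show 30 * n / 3 = 10 * n by omega, show 30 * n / 5 = 6 * n by omega] at hfact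
  have hconst : (27.637 : ℝ) ≤ 14 * Real.log 2 + 9 * Real.log 3 + 5 * Real.log 5 := by
    linarith [Real.log_two_gt_d9, Real.log_three_gt_d9, Real.log_five_gt_d9]
  have hlin : 27.637 * (n : ℝ) ≤ (14 * Real.log 2 + 9 * Real.log 3 + 5 * Real.log 5) * n := by
    gcongr
  linarith [log_factorial_combination_ge hn0]

theorem le_primeCounting_of_three_thousand_le {m : ℕ} (hm : 3000 ≤ m) :
    m ≤ Nat.primeCounting ⌊10 / 7 * (m * Real.log m)⌋₊ := by
  have hmR : (3000 : ℝ) ≤ m := by exact_mod_cast hm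
  set L := Real.log m with hL
  have hL8 : 8 ≤ L := by
    rw [hL, Real.le_log_iff_exp_le (by linarith)]
    calc Real.exp 8 = Real.exp 1 ^ 8 := by rw [← Real.exp_nat_mul]; norm_num
      _ ≤ 2.7182818286 ^ 8 := by gcongr; exact Real.exp_one_lt_d9.le
      _ ≤ 3000 := by norm_num
      _ ≤ m := hmR
  have hmL : 24000 ≤ m * L := by nlinarith
  -- Tangent lines to `log` at `1` and `8`, applied to `10 / 7` and `L`.
  have hlog : Real.log (10 / 7 * (m * L)) ≤ 1.5081 + 1.125 * L := by
    rw [Real.log_mul (by norm_num) (by linarith), Real.log_mul (by linarith) (by linarith), ← hL]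
    have h1 := Real.log_le_sub_one_of_pos (show (0 : ℝ) < 10 / 7 by norm_num)
    have h2 := Real.log_le_sub_one_of_pos (show (0 : ℝ) < L / 2 ^ 3 by linarith)
    rw [Real.log_div (by linarith) (by norm_num), Real.log_pow] at h2
    push_cast at h2
    linarith [Real.log_two_lt_d9]
  by_contra! hlt
  have hpi : (Nat.primeCounting ⌊10 / 7 * (m * L)⌋₊ : ℝ) ≤ m - 1 := by
    rw [le_sub_iff_add_le]
    exact_mod_cast hlt
  have hpsi : 0.9212 * (10 / 7 * (m * L)) - (1.5081 + 1.125 * L) / 2 - 31 ≤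
      (m - 1) * (1.5081 + 1.125 * L) := by
    calc _ ≤ 0.9212 * (10 / 7 * (m * L)) - Real.log (10 / 7 * (m * L)) / 2 - 31 := by gcongr
      _ ≤ Chebyshev.psi (10 / 7 * (m * L)) := mul_sub_log_le_psi (by linarith)
      _ ≤ _ := Chebyshev.psi_le_primeCounting_mul_log' _
      _ ≤ _ := mul_le_mul hpi hlog (Real.log_nonneg (by linarith)) (by linarith)
  nlinarith

end Chebyshev

section Sieve

theorem prime_iff_coprime_factorial {n B : ℕ} (hn : 1 < n) (hB : n < (B + 1) ^ 2) :
    n.Prime ↔ n.Coprime (min B (n - 1)).factorial := by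
  rw [Nat.coprime_factorial_iff hn.ne']
  refine ⟨fun hp ↦ by rw [hp.minFac_eq]; omega, fun hlt ↦ ?_⟩
  by_contra hnp
  have hsq := Nat.minFac_sq_le_self hn.le hnp
  have hminFac : n.minFac < n := (Nat.not_prime_iff_minFac_lt hn).mp hnp
  have : n.minFac < B + 1 := lt_of_pow_lt_pow_left₀ 2 (by omega) (hsq.trans_lt hB)
  omega

theorem primeCounting_add_count_coprime_le {B N k : ℕ} (hN : 0 < N) (hB : N + k < (B + 1) ^ 2) :
    N.primeCounting + Nat.count (fun i ↦ (N + 1 + i).Coprime (min B (N + i)).factorial) k ≤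
      (N + k).primeCounting := by
  change Nat.count Nat.Prime (N + 1) + _ ≤ Nat.count Nat.Prime (N + k + 1)
  rw [Nat.add_right_comm N k 1, Nat.count_add Nat.Prime (N + 1) k]
  refine Nat.add_le_add_left (Nat.count_mono_left fun i hi hcop ↦ ?_) _
  rw [prime_iff_coprime_factorial (B := B) (by omega) (by omega)]
  rwa [show N + 1 + i - 1 = N + i by omega]

/-- One step of the sieve. The state `(M, N)` records that at least `M` primes are `≤ N`; the step
moves `N` up to `b (M + 1)`, the bound to be verified for the next prime, as far as coprimality to
`B!` detects primes. -/
def sieveStep (b : ℕ → ℕ) (B : ℕ) (s : ℕ × ℕ) : ℕ × ℕ :=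
  let k := min (b (s.1 + 1)) ((B + 1) ^ 2 - 1) - s.2
  (s.1 + Nat.count (fun i ↦ (s.2 + 1 + i).Coprime (min B (s.2 + i)).factorial) k, s.2 + k)

theorem sieveStep_fst_le_primeCounting {b : ℕ → ℕ} {B : ℕ} {s : ℕ × ℕ} (hpos : 0 < s.2)
    (hs : s.1 ≤ s.2.primeCounting) :
    (sieveStep b B s).1 ≤ (sieveStep b B s).2.primeCounting := by
  unfold sieveStep
  dsimp only
  set k := min (b (s.1 + 1)) ((B + 1) ^ 2 - 1) - s.2 with hk
  rcases Nat.eq_zero_or_pos k with hk0 | hk0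
  · simpa only [hk0, Nat.count_zero, add_zero] using hs
  · grw [hs]
    exact primeCounting_add_count_coprime_le hpos (by rw [hk] at hk0 ⊢; omega)

theorem le_primeCounting_of_le_sieveStep {b : ℕ → ℕ} (hb : Monotone b) {B : ℕ} {s : ℕ × ℕ}
    (hpos : 0 < s.2) (hs : s.1 ≤ s.2.primeCounting) {m : ℕ} (hsm : s.1 < m)
    (hm : m ≤ (sieveStep b B s).1) : m ≤ (b m).primeCounting := by
  have hstep : (sieveStep b B s).2 ≤ b (s.1 + 1) := by
    by_contra! hlt
    have hk : min (b (s.1 + 1)) ((B + 1) ^ 2 - 1) - s.2 = 0 := by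
      simp only [sieveStep] at hlt
      omega
    simp only [sieveStep, hk, Nat.count_zero] at hm
    omega
  calc m ≤ (sieveStep b B s).1 := hm
    _ ≤ (sieveStep b B s).2.primeCounting := sieveStep_fst_le_primeCounting hpos hs
    _ ≤ (b m).primeCounting := Nat.monotone_primeCounting (hstep.trans (hb hsm))

theorem le_primeCounting_of_le_iterate_sieveStep {b : ℕ → ℕ} (hb : Monotone b) {B : ℕ}
    (j : ℕ) {s : ℕ × ℕ} (hpos : 0 < s.2) (hs : s.1 ≤ s.2.primeCounting) {m : ℕ} (hsm : s.1 < m)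
    (hm : m ≤ ((sieveStep b B)^[j] s).1) : m ≤ (b m).primeCounting := by
  induction j generalizing s with
  | zero => exact absurd hm hsm.not_ge
  | succ j ih =>
    rcases le_or_gt m (sieveStep b B s).1 with hle | hlt
    · exact le_primeCounting_of_le_sieveStep hb hpos hs hsm hle
    · exact ih (Nat.add_pos_left hpos _) (sieveStep_fst_le_primeCounting hpos hs) hlt hm

/-- A computable lower bound for `(10 / 7) m log m`, obtained from `0.6931 < log 2` and
`log₂ (m ^ 10) ≤ 10 log₂ m`; the tenth power makes the rounding of the logarithm harmless. -/
def mulLogBound (m : ℕ) : ℕ := 6931 * m * (m ^ 10).log2 / 70000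

theorem mulLogBound_mono : Monotone mulLogBound := by
  intro m n hmn
  unfold mulLogBound
  rw [Nat.log2_eq_log_two, Nat.log2_eq_log_two]
  gcongr

theorem mulLogBound_le (m : ℕ) : (mulLogBound m : ℝ) ≤ 10 / 7 * (m * Real.log m) := by
  rcases eq_or_ne m 0 with rfl | hm
  · simp [mulLogBound]
  have hlog : ((m ^ 10).log2 : ℝ) * Real.log 2 ≤ 10 * Real.log m := by
    have hpow : (2 : ℝ) ^ (m ^ 10).log2 ≤ (m : ℝ) ^ 10 := by
      exact_mod_cast Nat.log2_self_le (pow_ne_zero 10 hm)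
    simpa only [Real.log_pow, Nat.cast_ofNat] using Real.log_le_log (by positivity) hpow
  calc (mulLogBound m : ℝ) ≤ (6931 * m * (m ^ 10).log2 : ℕ) / (70000 : ℕ) := Nat.cast_div_le
    _ = m / 7 * ((m ^ 10).log2 * 0.6931) := by push_cast; ring
    _ ≤ m / 7 * ((m ^ 10).log2 * Real.log 2) := by
      gcongr
      linarith [Real.log_two_gt_d9]
    _ ≤ m / 7 * (10 * Real.log m) := by gcongr
    _ = 10 / 7 * (m * Real.log m) := by ring

theorem three_thousand_le_iterate_sieveStep :
    3000 ≤ ((sieveStep mulLogBound 166)^[39] (5, 12)).1 := by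
  decide +kernel

theorem le_primeCounting_mulLogBound {m : ℕ} (hm : 6 ≤ m) (hm' : m ≤ 3000) :
    m ≤ (mulLogBound m).primeCounting :=
  le_primeCounting_of_le_iterate_sieveStep (s := (5, 12)) mulLogBound_mono 39 (by norm_num)
    (by decide +kernel) hm (hm'.trans three_thousand_le_iterate_sieveStep)

end Sieve

theorem nthPrime_pos (n : ℕ) : 0 < nthPrime n := (Nat.prime_nth_prime _).pos

theorem nthPrime_le_of_le_primeCounting {m n : ℕ} (hm : m ≠ 0) (h : m ≤ n.primeCounting) :
    nthPrime m ≤ n :=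
  Nat.lt_succ_iff.mp (Nat.nth_lt_of_lt_count ((Nat.sub_one_lt hm).trans_le h))

theorem nthPrime_le_mul_log {m : ℕ} (hm : 6 ≤ m) :
    (nthPrime m : ℝ) ≤ 10 / 7 * (m * Real.log m) := by
  rcases le_total m 3000 with hle | hge
  · refine le_trans ?_ (mulLogBound_le m)
    exact_mod_cast nthPrime_le_of_le_primeCounting (by omega) (le_primeCounting_mulLogBound hm hle)
  · refine le_trans ?_ (Nat.floor_le (by positivity))
    exact_mod_cast nthPrime_le_of_le_primeCounting (by omega)
      (le_primeCounting_of_three_thousand_le hge)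

theorem rpow_neg_le_rpow_neg_nthPrime {t x : ℝ} (ht₀ : 0 ≤ t) (ht₁ : t ≤ 1) {n : ℕ} (hn : 6 ≤ n)
    (hnx : n ≤ x) :
    7 / 10 * (Real.log x ^ t)⁻¹ * (n : ℝ) ^ (-t) ≤ (nthPrime n : ℝ) ^ (-t) := by
  have hn6 : (6 : ℝ) ≤ n := by exact_mod_cast hn
  have hlogx : 0 < Real.log x := Real.log_pos (by linarith)
  have hp : (nthPrime n : ℝ) ≤ 10 / 7 * (n * Real.log x) := by
    refine (nthPrime_le_mul_log hn).trans ?_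
    gcongr
  have hconst : (7 / 10 : ℝ) ≤ (10 / 7 : ℝ) ^ (-t) := by
    calc (7 / 10 : ℝ) = (10 / 7 : ℝ) ^ (-1 : ℝ) := by norm_num [Real.rpow_neg_one]
      _ ≤ (10 / 7 : ℝ) ^ (-t) := by gcongr; norm_num
  calc 7 / 10 * (Real.log x ^ t)⁻¹ * (n : ℝ) ^ (-t)
      ≤ (10 / 7 : ℝ) ^ (-t) * (Real.log x ^ t)⁻¹ * (n : ℝ) ^ (-t) := by gcongr
    _ = (10 / 7 * (n * Real.log x)) ^ (-t) := by
      rw [Real.mul_rpow (by norm_num) (by positivity), Real.mul_rpow (by positivity) hlogx.le,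
        Real.rpow_neg hlogx.le]
      ring
    _ ≤ (nthPrime n : ℝ) ^ (-t) :=
      Real.rpow_le_rpow_of_nonpos (by exact_mod_cast nthPrime_pos n) hp (neg_nonpos.mpr ht₀)

theorem rpow_sub_rpow_div_le_sum_rpow_neg {t x : ℝ} (ht₀ : 0 ≤ t) (ht₁ : t < 1) (hx : 0 ≤ x)
    {a : ℕ} (ha : 0 < a) :
    (x ^ (1 - t) - (a : ℝ) ^ (1 - t)) / (1 - t) ≤ ∑ n ∈ Finset.Icc a ⌊x⌋₊, (n : ℝ) ^ (-t) := by
  have hs : 0 < 1 - t := sub_pos.mpr ht₁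
  rcases lt_or_ge x a with hxa | hax
  · have hpow : x ^ (1 - t) ≤ (a : ℝ) ^ (1 - t) := by gcongr
    exact (div_nonpos_of_nonpos_of_nonneg (sub_nonpos.mpr hpow) hs.le).trans
      (Finset.sum_nonneg fun n _ ↦ by positivity)
  have hanti : AntitoneOn (fun u : ℝ ↦ u ^ (-t)) (Set.Icc (a : ℝ) ((⌊x⌋₊ + 1 : ℕ) : ℝ)) :=
    (Real.antitoneOn_rpow_Ioi_of_exponent_nonpos (neg_nonpos.mpr ht₀)).mono fun u hu ↦
      (Nat.cast_pos.mpr ha).trans_le hu.1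
  calc (x ^ (1 - t) - (a : ℝ) ^ (1 - t)) / (1 - t)
      ≤ (((⌊x⌋₊ + 1 : ℕ) : ℝ) ^ (1 - t) - (a : ℝ) ^ (1 - t)) / (1 - t) := by
        gcongr
        exact_mod_cast (Nat.lt_floor_add_one x).le
    _ = ∫ u in (a : ℝ)..((⌊x⌋₊ + 1 : ℕ) : ℝ), u ^ (-t) := by
        rw [integral_rpow (.inl (by linarith)), neg_add_eq_sub]
    _ ≤ ∑ n ∈ Finset.Ico a (⌊x⌋₊ + 1), (n : ℝ) ^ (-t) :=
        hanti.integral_le_sum_Ico (Nat.le_succ_of_le (Nat.le_floor hax))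
    _ = ∑ n ∈ Finset.Icc a ⌊x⌋₊, (n : ℝ) ^ (-t) := by rw [Finset.Ico_add_one_right_eq_Icc]

theorem sum_Icc_rpow_neg_nthPrime_lt {t x : ℝ} {a : ℕ} (ha : 1 < a) (hx : 1 ≤ x) :
    ∑ n ∈ Finset.Icc a ⌊x⌋₊, (nthPrime n : ℝ) ^ (-t) <
      ∑ n ∈ Finset.Icc 1 ⌊x⌋₊, (nthPrime n : ℝ) ^ (-t) := by
  have hpos (n : ℕ) : 0 < (nthPrime n : ℝ) ^ (-t) :=
    Real.rpow_pos_of_pos (by exact_mod_cast nthPrime_pos n) _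
  refine Finset.sum_lt_sum_of_subset (i := 1) (Finset.Icc_subset_Icc_left ha.le) ?_ ?_ (hpos 1)
    fun n _ _ ↦ (hpos n).le
  · exact Finset.mem_Icc.mpr ⟨le_rfl, (Nat.one_le_floor_iff x).mpr hx⟩
  · rw [Finset.mem_Icc]
    omega

theorem sum_reciprocal_prime_powers_lower_bound_general {t x : ℝ} (ht₀ : 0 ≤ t) (ht₁ : t < 1)
    (hx : 1 < x) :
    7 * (x ^ (1 - t) - (6 : ℝ) ^ (1 - t)) / (10 * (1 - t) * Real.log x ^ t) <
      ∑ n ∈ Finset.Icc 1 ⌊x⌋₊, (nthPrime n : ℝ) ^ (-t) := by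
  have hlogx : 0 < Real.log x := Real.log_pos hx
  calc 7 * (x ^ (1 - t) - (6 : ℝ) ^ (1 - t)) / (10 * (1 - t) * Real.log x ^ t)
      = 7 / 10 * (Real.log x ^ t)⁻¹ * ((x ^ (1 - t) - ((6 : ℕ) : ℝ) ^ (1 - t)) / (1 - t)) := by
        push_cast
        field_simp
    _ ≤ 7 / 10 * (Real.log x ^ t)⁻¹ * ∑ n ∈ Finset.Icc 6 ⌊x⌋₊, (n : ℝ) ^ (-t) := by
        gcongr
        exact rpow_sub_rpow_div_le_sum_rpow_neg ht₀ ht₁ (by linarith) (by norm_num)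
    _ ≤ ∑ n ∈ Finset.Icc 6 ⌊x⌋₊, (nthPrime n : ℝ) ^ (-t) := by
        rw [Finset.mul_sum]
        refine Finset.sum_le_sum fun n hn ↦ ?_
        obtain ⟨hn6, hnx⟩ := Finset.mem_Icc.mp hn
        exact rpow_neg_le_rpow_neg_nthPrime ht₀ ht₁.le hn6
          ((Nat.le_floor_iff (by linarith)).mp hnx)
    _ < ∑ n ∈ Finset.Icc 1 ⌊x⌋₊, (nthPrime n : ℝ) ^ (-t) :=
        sum_Icc_rpow_neg_nthPrime_lt (by norm_num) hx.le

theorem sum_reciprocal_prime_powers_lower_bound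
    (t x : ℝ) (ht₁ : 1 / 2 < t) (ht₂ : t < 1) (hx : (6 : ℝ) ≤ x) :
    7 * (x ^ (1 - t) - (6 : ℝ) ^ (1 - t)) / (10 * (1 - t) * Real.log x ^ t) <
      ∑ n ∈ Finset.Icc 1 ⌊x⌋₊, (nthPrime n : ℝ) ^ (-t) :=
  sum_reciprocal_prime_powers_lower_bound_general (by linarith) ht₂ (by linarith)
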